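/- arXiv:2012.11177 — 4 statements merged into one kernel-verified Lean document; each statement's English description precedes it below -/
import Mathlib

section
/- Let P_n be the path on n vertices and let 0 ≤ α < 1/2. Then for every k with 1 ≤ k ≤ n, S_k(A_α(P_n)) ≤ 2αk + α − 1 + α·csc(π/(2n))·sin((2k+1)π/(2n)) + (1−2α)·csc(π/(2(n+1)))·sin((2k+1)π/(2(n+1))). -/
open Matrix Finset Real

/-- The `A_α`-matrix of a graph: `A_α(G) = α·D(G) + (1−α)·A(G)`. -/
noncomputable def Aalpha {n : ℕ} (α : ℝ) (G : SimpleGraph (Fin n)) [DecidableRel G.Adj] :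
    Matrix (Fin n) (Fin n) ℝ :=
  α • Matrix.diagonal (fun i => (G.degree i : ℝ)) + (1 - α) • G.adjMatrix ℝ

/-- The sum of the `k` largest eigenvalues of a real symmetric matrix, expressed as
the supremum over all `k`-subsets of indices of the corresponding eigenvalue sums. -/
noncomputable def Sk {n : ℕ} (M : Matrix (Fin n) (Fin n) ℝ) (k : ℕ) : ℝ :=
  if h : M.IsHermitian then
    sSup {x : ℝ | ∃ s : Finset (Fin n), s.card = k ∧ x = ∑ i ∈ s, h.eigenvalues i}
  else 0

/-! Write `Q = D + A` for the signless Laplacian. For `α ≤ 1 / 2` the matrix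
`A_α = α Q + (1 - 2α) A` is a nonnegative combination, so Ky Fan's maximum principle (`S_k(M)` is
the largest value of `∑ ⟨v_i, M v_i⟩` over orthonormal `v_1, …, v_k`, hence sublinear in `M`) gives
`S_k(A_α) ≤ α S_k(Q) + (1 - 2α) S_k(A)`. On the path both spectra are explicit, with sine
eigenvectors: `2 cos (jπ / (n + 1))` for `A` and `2 + 2 cos (jπ / n)` for `Q`, `1 ≤ j ≤ n`. These
values are decreasing in `j`, so each `S_k` is a partial sum of cosines, which telescopes. -/

section TopSubsets

variable {ι : Type*}

lemma sum_le_sum_of_forall_notMem_le {R : Type*} [AddCommMonoid R] [PartialOrder R]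
    [IsOrderedCancelAddMonoid R] {f : ι → R} {s t : Finset ι}
    (hs : ∀ i ∈ s, ∀ j ∉ s, f j ≤ f i) (hst : #t = #s) : ∑ i ∈ t, f i ≤ ∑ i ∈ s, f i := by
  classical
  let e := equivOfCardEq (card_sdiff_comm hst)
  rw [← sum_sdiff_le_sum_sdiff, ← sum_coe_sort (t \ s), ← sum_coe_sort (s \ t), ← e.sum_comp]
  exact sum_le_sum fun i _ => hs _ (mem_sdiff.mp (e i).2).1 _ (mem_sdiff.mp i.2).2

variable [Fintype ι]

lemma exists_card_eq_forall_notMem_le {R : Type*} [LinearOrder R] (f : ι → R) {k : ℕ}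
    (hk : k ≤ Fintype.card ι) :
    ∃ s : Finset ι, #s = k ∧ ∀ i ∈ s, ∀ j ∉ s, f j ≤ f i := by
  classical
  induction k with
  | zero => exact ⟨∅, by simp⟩
  | succ k ih =>
    obtain ⟨s, hs, htop⟩ := ih (by lia)
    have hne : sᶜ.Nonempty := by
      rw [← card_pos, card_compl]
      lia
    obtain ⟨m, hm, hmax⟩ := exists_max_image sᶜ f hne
    rw [mem_compl] at hm
    refine ⟨insert m s, by rw [card_insert_of_notMem hm, hs], fun i hi j hj => ?_⟩
    rw [mem_insert, not_or] at hj
    obtain rfl | hi := mem_insert.mp hi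
    · exact hmax j (mem_compl.mpr hj.2)
    · exact htop i hi j hj.2

lemma sum_mul_le_sum_of_forall_notMem_le {R : Type*} [CommRing R] [LinearOrder R]
    [IsStrictOrderedRing R] {f w : ι → R} {s : Finset ι}
    (hs : ∀ i ∈ s, ∀ j ∉ s, f j ≤ f i) (hw0 : ∀ i, 0 ≤ w i) (hw1 : ∀ i, w i ≤ 1)
    (hw : ∑ i, w i = #s) : ∑ i, f i * w i ≤ ∑ i ∈ s, f i := by
  classical
  obtain rfl | hne := s.eq_empty_or_nonempty
  · have hzero : w = 0 := (Fintype.sum_eq_zero_iff_of_nonneg hw0).mp (by simpa using hw)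
    simp [hzero]
  obtain ⟨m, hm, hmin⟩ := exists_min_image s f hne
  have hterm (i : ι) : (f i - f m) * w i ≤ if i ∈ s then f i - f m else 0 := by
    split_ifs with hi
    · exact mul_le_of_le_one_right (sub_nonneg.mpr (hmin i hi)) (hw1 i)
    · exact mul_nonpos_of_nonpos_of_nonneg (sub_nonpos.mpr (hs m hm i hi)) (hw0 i)
  have hsum := sum_le_sum fun i (_ : i ∈ univ) => hterm i
  simp only [sub_mul, sum_sub_distrib, ← mul_sum, hw, sum_ite_mem, univ_inter, sum_const,
    nsmul_eq_mul] at hsum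
  linarith

end TopSubsets

section KyFan

variable {n : ℕ} {M : Matrix (Fin n) (Fin n) ℝ}

lemma Sk_eq_sum_of_forall_notMem_le (hM : M.IsHermitian) {s : Finset (Fin n)}
    (hs : ∀ i ∈ s, ∀ j ∉ s, hM.eigenvalues j ≤ hM.eigenvalues i) :
    Sk M #s = ∑ i ∈ s, hM.eigenvalues i := by
  rw [Sk, dif_pos hM]
  refine IsGreatest.csSup_eq ⟨⟨s, rfl, rfl⟩, ?_⟩
  rintro _ ⟨t, ht, rfl⟩
  exact sum_le_sum_of_forall_notMem_le hs ht

lemma exists_Sk_eq_sum_eigenvalues (hM : M.IsHermitian) {k : ℕ} (hk : k ≤ n) :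
    ∃ s : Finset (Fin n), #s = k ∧ (∀ i ∈ s, ∀ j ∉ s, hM.eigenvalues j ≤ hM.eigenvalues i) ∧
      Sk M k = ∑ i ∈ s, hM.eigenvalues i := by
  obtain ⟨s, rfl, hs⟩ := exists_card_eq_forall_notMem_le hM.eigenvalues (k := k) (by simpa using hk)
  exact ⟨s, rfl, hs, Sk_eq_sum_of_forall_notMem_le hM hs⟩

lemma exists_orthonormal_Sk_eq_sum (hM : M.IsHermitian) {k : ℕ} (hk : k ≤ n) :
    ∃ v : Fin k → EuclideanSpace ℝ (Fin n), Orthonormal ℝ v ∧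
      Sk M k = ∑ i, (v i).ofLp ⬝ᵥ M *ᵥ (v i).ofLp := by
  obtain ⟨s, hs, -, hSk⟩ := exists_Sk_eq_sum_eigenvalues hM hk
  let e := s.equivFinOfCardEq hs
  refine ⟨fun i => hM.eigenvectorBasis (e.symm i),
    hM.eigenvectorBasis.orthonormal.comp _ (Subtype.val_injective.comp e.symm.injective), ?_⟩
  rw [hSk, ← sum_coe_sort, ← e.symm.sum_comp]
  simp [hM.eigenvalues_eq]

lemma dotProduct_mulVec_eq_sum_eigenvalues_mul_inner_sq {m : Type*} [Fintype m] [DecidableEq m]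
    {A : Matrix m m ℝ} (hA : A.IsHermitian) (x : EuclideanSpace ℝ m) :
    x.ofLp ⬝ᵥ A *ᵥ x.ofLp =
      ∑ j, hA.eigenvalues j * inner ℝ x (hA.eigenvectorBasis j) ^ 2 := by
  have hsymm := isSymmetric_toEuclideanLin_iff.mpr hA
  have heig (j : m) : A.toEuclideanLin (hA.eigenvectorBasis j) =
      hA.eigenvalues j • hA.eigenvectorBasis j := by
    rw [toLpLin_apply, hA.mulVec_eigenvectorBasis]
    rfl
  calc x.ofLp ⬝ᵥ A *ᵥ x.ofLp = inner ℝ x (A.toEuclideanLin x) := by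
        simp [EuclideanSpace.inner_eq_star_dotProduct, dotProduct_comm, toLpLin_apply]
    _ = ∑ j, inner ℝ x (hA.eigenvectorBasis j) *
          inner ℝ (hA.eigenvectorBasis j) (A.toEuclideanLin x) :=
        (hA.eigenvectorBasis.sum_inner_mul_inner _ _).symm
    _ = ∑ j, hA.eigenvalues j * inner ℝ x (hA.eigenvectorBasis j) ^ 2 := by
        refine sum_congr rfl fun j _ => ?_
        rw [← hsymm, heig, real_inner_smul_left, real_inner_comm x]
        ring

theorem sum_dotProduct_mulVec_le_Sk (hM : M.IsHermitian) {k : ℕ}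
    {v : Fin k → EuclideanSpace ℝ (Fin n)} (hv : Orthonormal ℝ v) :
    ∑ i, (v i).ofLp ⬝ᵥ M *ᵥ (v i).ofLp ≤ Sk M k := by
  have hk : k ≤ n := by simpa using hv.linearIndependent.fintype_card_le_finrank
  obtain ⟨s, hs, htop, hSk⟩ := exists_Sk_eq_sum_eigenvalues hM hk
  let w (j : Fin n) : ℝ := ∑ i, inner ℝ (v i) (hM.eigenvectorBasis j) ^ 2
  have hw1 (j : Fin n) : w j ≤ 1 := by
    simpa [w] using hv.sum_inner_products_le (hM.eigenvectorBasis j) (s := univ)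
  have hw : ∑ j, w j = #s := by
    rw [sum_comm, hs]
    have hunit (i : Fin k) : ∑ j, inner ℝ (v i) (hM.eigenvectorBasis j) ^ 2 = 1 := by
      simpa [hv.1 i] using hM.eigenvectorBasis.sum_sq_norm_inner_left (v i)
    simp [hunit]
  calc ∑ i, (v i).ofLp ⬝ᵥ M *ᵥ (v i).ofLp = ∑ j, hM.eigenvalues j * w j := by
        simp only [dotProduct_mulVec_eq_sum_eigenvalues_mul_inner_sq hM, w, mul_sum]
        exact sum_comm
    _ ≤ ∑ j ∈ s, hM.eigenvalues j :=
        sum_mul_le_sum_of_forall_notMem_le htop (fun j => sum_nonneg fun i _ => sq_nonneg _) hw1 hw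
    _ = Sk M k := hSk.symm

theorem Sk_add_le {A B : Matrix (Fin n) (Fin n) ℝ} (hA : A.IsHermitian) (hB : B.IsHermitian)
    {k : ℕ} (hk : k ≤ n) : Sk (A + B) k ≤ Sk A k + Sk B k := by
  obtain ⟨v, hv, hSk⟩ := exists_orthonormal_Sk_eq_sum (hA.add hB) hk
  simp only [hSk, add_mulVec, dotProduct_add, sum_add_distrib]
  exact add_le_add (sum_dotProduct_mulVec_le_Sk hA hv) (sum_dotProduct_mulVec_le_Sk hB hv)

theorem Sk_smul_le {c : ℝ} (hc : 0 ≤ c) (hM : M.IsHermitian) {k : ℕ} (hk : k ≤ n) :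
    Sk (c • M) k ≤ c * Sk M k := by
  obtain ⟨v, hv, hSk⟩ := exists_orthonormal_Sk_eq_sum (hM.smul (IsSelfAdjoint.all c)) hk
  simp only [hSk, smul_mulVec, dotProduct_smul, smul_eq_mul, ← mul_sum]
  exact mul_le_mul_of_nonneg_left (sum_dotProduct_mulVec_le_Sk hM hv) hc

theorem Sk_eq_sum_of_strictAnti (hM : M.IsHermitian) {μ : Fin n → ℝ} (hμ : StrictAnti μ)
    (hμM : ∀ j, μ j ∈ spectrum ℝ M) {k : ℕ} (hk : k ≤ n) :
    Sk M k = ∑ j : Fin k, μ (Fin.castLE hk j) := by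
  simp only [hM.spectrum_real_eq_range_eigenvalues, Set.mem_range] at hμM
  choose σ hσ using hμM
  have hσinj : Function.Injective σ := fun i j hij => hμ.injective <| by rw [← hσ, ← hσ, hij]
  have hσsurj : Function.Surjective σ := Finite.surjective_of_injective hσinj
  let s : Finset (Fin n) := univ.map ((Fin.castLEEmb hk).trans ⟨σ, hσinj⟩)
  have hmem (j : Fin n) : σ j ∈ s ↔ j.val < k := by
    simp only [s, mem_map, mem_univ, true_and, Function.Embedding.trans_apply,
      Function.Embedding.coeFn_mk, hσinj.eq_iff, Fin.castLEEmb_apply]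
    exact ⟨by rintro ⟨i, rfl⟩; exact i.2, fun hj => ⟨⟨j, hj⟩, rfl⟩⟩
  have htop : ∀ i ∈ s, ∀ j ∉ s, hM.eigenvalues j ≤ hM.eigenvalues i := by
    intro i hi j hj
    obtain ⟨i, rfl⟩ := hσsurj i
    obtain ⟨j, rfl⟩ := hσsurj j
    rw [hmem] at hi hj
    rw [hσ, hσ]
    exact hμ.antitone (Fin.le_def.mpr (by lia))
  simpa [s, hσ] using Sk_eq_sum_of_forall_notMem_le hM htop

end KyFan

lemma mem_spectrum_of_mulVec_eq_smul {m K : Type*} [Fintype m] [DecidableEq m] [Field K]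
    {A : Matrix m m K} {μ : K} {x : m → K} (hx : x ≠ 0) (h : A *ᵥ x = μ • x) :
    μ ∈ spectrum K A := by
  rw [← spectrum_toLin']
  have heig : Module.End.HasEigenvector A.toLin' μ x :=
    ⟨Module.End.mem_eigenspace_iff.mpr (by rwa [toLin'_apply]), hx⟩
  exact (Module.End.hasEigenvalue_of_hasEigenvector heig).mem_spectrum

section SignlessLaplacian

variable {V : Type*} [Fintype V] [DecidableEq V] (G : SimpleGraph V) [DecidableRel G.Adj]

/-- The signless Laplacian `Q(G) = D(G) + A(G)` of a graph. For `0 ≤ α ≤ 1 / 2` the matrix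
`A_α(G)` is the nonnegative combination `α Q(G) + (1 - 2α) A(G)`. -/
def signlessLapMatrix (R : Type*) [NonAssocSemiring R] : Matrix V V R :=
  G.degMatrix R + G.adjMatrix R

lemma isHermitian_signlessLapMatrix (R : Type*) [NonAssocSemiring R] [StarRing R] :
    (signlessLapMatrix G R).IsHermitian :=
  (G.isHermitian_degMatrix R).add (G.isHermitian_adjMatrix R)

lemma signlessLapMatrix_mulVec_apply {R : Type*} [NonAssocSemiring R] (x : V → R) (v : V) :
    (signlessLapMatrix G R *ᵥ x) v = ∑ u ∈ G.neighborFinset v, (x v + x u) := by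
  simp [signlessLapMatrix, add_mulVec, SimpleGraph.degMatrix_mulVec_apply,
    SimpleGraph.adjMatrix_mulVec_apply, sum_add_distrib]

end SignlessLaplacian

section Aalpha

variable {n : ℕ} (G : SimpleGraph (Fin n)) [DecidableRel G.Adj]

lemma Aalpha_eq_smul_signlessLapMatrix_add_smul_adjMatrix (α : ℝ) :
    Aalpha α G = α • signlessLapMatrix G ℝ + (1 - 2 * α) • G.adjMatrix ℝ := by
  rw [Aalpha, signlessLapMatrix, SimpleGraph.degMatrix]
  module

theorem Sk_Aalpha_le {α : ℝ} (hα0 : 0 ≤ α) (hα1 : α ≤ 1 / 2) {k : ℕ} (hk : k ≤ n) :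
    Sk (Aalpha α G) k ≤ α * Sk (signlessLapMatrix G ℝ) k + (1 - 2 * α) * Sk (G.adjMatrix ℝ) k := by
  have hQ := isHermitian_signlessLapMatrix G ℝ
  have hA := G.isHermitian_adjMatrix ℝ
  have hα : 0 ≤ 1 - 2 * α := by linarith
  rw [Aalpha_eq_smul_signlessLapMatrix_add_smul_adjMatrix]
  calc Sk (α • signlessLapMatrix G ℝ + (1 - 2 * α) • G.adjMatrix ℝ) k
      ≤ Sk (α • signlessLapMatrix G ℝ) k + Sk ((1 - 2 * α) • G.adjMatrix ℝ) k :=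
        Sk_add_le (hQ.smul (.all _)) (hA.smul (.all _)) hk
    _ ≤ _ := add_le_add (Sk_smul_le hα0 hQ hk) (Sk_smul_le hα hA hk)

end Aalpha

section CosineProgression

lemma two_mul_sum_range_cos {t : ℝ} (ht : sin (t / 2) ≠ 0) (k : ℕ) :
    ∑ j ∈ range k, 2 * cos ((j + 1) * t) =
      (sin (t / 2))⁻¹ * sin ((2 * k + 1) * (t / 2)) - 1 := by
  have hsum := sin_mul_sum_cos k t t
  have hprod := two_mul_sin_mul_cos (k * t / 2) ((k - 1) * t / 2 + t)
  rw [show k * t / 2 - ((k - 1) * t / 2 + t) = -(t / 2) by ring, sin_neg,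
    show k * t / 2 + ((k - 1) * t / 2 + t) = (2 * k + 1) * (t / 2) by ring] at hprod
  have hcongr : ∑ j ∈ range k, cos (t * j + t) = ∑ j ∈ range k, cos ((j + 1) * t) :=
    sum_congr rfl fun j _ => by ring_nf
  rw [← mul_sum, ← hcongr, eq_sub_iff_add_eq, eq_inv_mul_iff_mul_eq₀ ht]
  linear_combination 2 * hsum + hprod

lemma strictAnti_cos_add_one_mul_pi_div {n m : ℕ} (hnm : n ≤ m) :
    StrictAnti fun j : Fin n => cos ((j + 1) * (π / m)) := by
  intro i j hij
  have hm : (0 : ℝ) < m := mod_cast i.pos.trans_le hnm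
  have hij' : (i : ℝ) < j := mod_cast hij
  have hjm : (j : ℝ) + 1 ≤ m := mod_cast j.2.trans_le hnm
  refine cos_lt_cos_of_nonneg_of_le_pi (by positivity) ?_ (by gcongr)
  calc ((j : ℝ) + 1) * (π / m) ≤ m * (π / m) := by gcongr
    _ = π := mul_div_cancel₀ π hm.ne'

lemma sin_pi_div_div_two_ne_zero {m : ℕ} (hm : 0 < m) : sin (π / m / 2) ≠ 0 := by
  have hm1 : (1 : ℝ) ≤ m := mod_cast hm
  have hle : π / m ≤ π := div_le_self pi_nonneg hm1
  exact (sin_pos_of_pos_of_lt_pi (by positivity) (by linarith [pi_pos])).ne'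

end CosineProgression

section PathGraph

variable {n : ℕ} [DecidableRel (SimpleGraph.pathGraph n).Adj]

lemma sum_neighborFinset_pathGraph {R : Type*} [AddCommMonoid R] (f : ℕ → R) (i : Fin n)
    (h0 : i.val = 0 → f 0 = 0) (hn : i.val + 1 = n → f (n + 1) = 0) :
    ∑ j ∈ (SimpleGraph.pathGraph n).neighborFinset i, f (j + 1) = f i + f (i + 2) := by
  have hsplit (j : ℕ) : (if i.val + 1 = j ∨ j + 1 = i.val then f (j + 1) else 0) =
      (if j + 1 = i.val then f i.val else 0) + (if i.val + 1 = j then f (i.val + 2) else 0) := by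
    grind
  have hleft : ∑ j : Fin n, (if j.val + 1 = i.val then f i else 0) = f i := by
    obtain ⟨_ | i, hi⟩ := i
    · simp [h0]
    · rw [Fintype.sum_eq_single ⟨i, by lia⟩ fun j hj =>
        if_neg fun h => hj <| Fin.ext <| by simpa using h]
      simp
  have hright : ∑ j : Fin n, (if i.val + 1 = j.val then f (i + 2) else 0) = f (i + 2) := by
    obtain hi | hi := Nat.lt_or_eq_of_le i.isLt
    · rw [Fintype.sum_eq_single ⟨i + 1, hi⟩ fun j hj => if_neg fun h => hj <| Fin.ext h.symm]
      simp
    · have hzero : f (i + 2) = 0 := (congrArg f (by lia)).trans (hn hi)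
      simp [hzero]
  rw [SimpleGraph.neighborFinset_eq_filter, sum_filter]
  simp only [SimpleGraph.pathGraph_adj, hsplit, sum_add_distrib, hleft, hright]

lemma adjMatrix_pathGraph_mulVec_sin {θ : ℝ} (hθ : sin ((n + 1) * θ) = 0) :
    (SimpleGraph.pathGraph n).adjMatrix ℝ *ᵥ (fun i : Fin n => sin ((i + 1) * θ)) =
      (2 * cos θ) • fun i : Fin n => sin ((i + 1) * θ) := by
  funext i
  have hsum := sum_neighborFinset_pathGraph (fun j => sin (j * θ)) i (by simp) (by simp [hθ])
  push_cast at hsum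
  rw [SimpleGraph.adjMatrix_mulVec_apply, hsum, sin_add_sin,
    show (i * θ + (i + 2) * θ) / 2 = (i + 1) * θ by ring,
    show (i * θ - (i + 2) * θ) / 2 = -θ by ring, cos_neg, Pi.smul_apply, smul_eq_mul]
  ring

lemma signlessLapMatrix_pathGraph_mulVec_sin {θ : ℝ} (hθ : sin (n * θ) = 0) :
    signlessLapMatrix (SimpleGraph.pathGraph n) ℝ *ᵥ (fun i : Fin n => sin ((i + 1 / 2) * θ)) =
      (2 + 2 * cos θ) • fun i : Fin n => sin ((i + 1 / 2) * θ) := by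
  funext i
  -- A missing neighbour contributes nothing to the degree, which at the ends of the path is the
  -- antisymmetry of `f` about `1 / 2` and about `n + 1 / 2`.
  let f (j : ℕ) : ℝ := sin ((j - 1 / 2) * θ)
  have hvec (j : Fin n) : sin ((j + 1 / 2) * θ) = f (j + 1) := by
    simp only [f, Nat.cast_succ]
    ring_nf
  have hrec : f i + f (i + 2) = 2 * cos θ * f (i + 1) := by
    simp only [f]
    push_cast
    rw [sin_add_sin, show ((i - 1 / 2) * θ + (i + 2 - 1 / 2) * θ) / 2 = (i + 1 - 1 / 2) * θ by ring,
      show ((i - 1 / 2) * θ - (i + 2 - 1 / 2) * θ) / 2 = -θ by ring, cos_neg]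
    ring
  have hleft : i.val = 0 → f (i + 1) + f 0 = 0 := by
    intro hi
    simp only [f, hi, ← sin_neg, add_eq_zero_iff_eq_neg]
    push_cast
    ring_nf
  have hright : i.val + 1 = n → f (i + 1) + f (n + 1) = 0 := by
    intro hi
    simp only [f, hi, sin_add_sin]
    push_cast
    rw [show ((n - 1 / 2) * θ + (n + 1 - 1 / 2) * θ) / 2 = n * θ by ring, hθ]
    ring
  have hsum := sum_neighborFinset_pathGraph (fun j => f (i + 1) + f j) i hleft hright
  simp only [hvec, signlessLapMatrix_mulVec_apply, hsum, Pi.smul_apply, smul_eq_mul]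
  linear_combination hrec

lemma two_mul_cos_mem_spectrum_adjMatrix_pathGraph (j : Fin n) :
    2 * cos ((j + 1) * (π / (n + 1 : ℕ))) ∈ spectrum ℝ ((SimpleGraph.pathGraph n).adjMatrix ℝ) := by
  have hj : (j : ℝ) + 1 < (n + 1 : ℕ) := by exact_mod_cast Nat.succ_lt_succ j.2
  have hθ : ((n + 1 : ℕ) : ℝ) * ((j + 1) * (π / (n + 1 : ℕ))) = (j + 1 : ℕ) * π := by
    push_cast
    field_simp
  refine mem_spectrum_of_mulVec_eq_smul (fun h => ?_)
    (adjMatrix_pathGraph_mulVec_sin (by rw [← Nat.cast_succ, hθ, sin_nat_mul_pi]))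
  have hpos : 0 < sin ((j + 1) * (π / (n + 1 : ℕ))) := by
    refine sin_pos_of_pos_of_lt_pi (by positivity) ?_
    calc ((j : ℝ) + 1) * (π / (n + 1 : ℕ)) < (n + 1 : ℕ) * (π / (n + 1 : ℕ)) := by gcongr
      _ = π := mul_div_cancel₀ π (by positivity)
  exact hpos.ne' (by simpa using congrFun h ⟨0, j.pos⟩)

lemma two_add_two_mul_cos_mem_spectrum_signlessLapMatrix_pathGraph (j : Fin n) :
    2 + 2 * cos ((j + 1) * (π / n)) ∈
      spectrum ℝ (signlessLapMatrix (SimpleGraph.pathGraph n) ℝ) := by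
  have hn : (0 : ℝ) < n := mod_cast j.pos
  have hj : (j : ℝ) + 1 ≤ n := mod_cast j.2
  have hθ : n * ((j + 1) * (π / n)) = (j + 1 : ℕ) * π := by
    push_cast
    field_simp
  refine mem_spectrum_of_mulVec_eq_smul (fun h => ?_)
    (signlessLapMatrix_pathGraph_mulVec_sin (by rw [hθ, sin_nat_mul_pi]))
  have hpos : 0 < sin (1 / 2 * ((j + 1) * (π / n))) := by
    refine sin_pos_of_pos_of_lt_pi (by positivity) ?_
    calc 1 / 2 * (((j : ℝ) + 1) * (π / n)) ≤ 1 / 2 * (n * (π / n)) := by gcongr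
      _ = π / 2 := by field_simp
      _ < π := half_lt_self pi_pos
  exact hpos.ne' (by simpa using congrFun h ⟨0, j.pos⟩)

theorem Sk_adjMatrix_pathGraph {k : ℕ} (hk : k ≤ n) :
    Sk ((SimpleGraph.pathGraph n).adjMatrix ℝ) k =
      (sin (π / (2 * (n + 1))))⁻¹ * sin ((2 * k + 1) * π / (2 * (n + 1))) - 1 := by
  have hanti : StrictAnti fun j : Fin n => 2 * cos ((j + 1) * (π / (n + 1 : ℕ))) :=
    (strictAnti_cos_add_one_mul_pi_div n.le_succ).const_mul two_pos
  rw [Sk_eq_sum_of_strictAnti (SimpleGraph.isHermitian_adjMatrix ..) hanti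
    two_mul_cos_mem_spectrum_adjMatrix_pathGraph hk]
  simp only [Fin.val_castLE]
  rw [Fin.sum_univ_eq_sum_range (fun j => 2 * cos ((j + 1) * (π / (n + 1 : ℕ)))),
    two_mul_sum_range_cos (sin_pi_div_div_two_ne_zero n.succ_pos)]
  push_cast
  congr 3 <;> field_simp

theorem Sk_signlessLapMatrix_pathGraph (hn : 0 < n) {k : ℕ} (hk : k ≤ n) :
    Sk (signlessLapMatrix (SimpleGraph.pathGraph n) ℝ) k =
      2 * k + (sin (π / (2 * n)))⁻¹ * sin ((2 * k + 1) * π / (2 * n)) - 1 := by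
  have hanti : StrictAnti fun j : Fin n => 2 + 2 * cos ((j + 1) * (π / n)) :=
    ((strictAnti_cos_add_one_mul_pi_div le_rfl).const_mul two_pos).const_add 2
  rw [Sk_eq_sum_of_strictAnti (isHermitian_signlessLapMatrix ..) hanti
    two_add_two_mul_cos_mem_spectrum_signlessLapMatrix_pathGraph hk]
  simp only [Fin.val_castLE]
  rw [Fin.sum_univ_eq_sum_range (fun j => 2 + 2 * cos ((j + 1) * (π / n))), sum_add_distrib,
    two_mul_sum_range_cos (sin_pi_div_div_two_ne_zero hn)]
  rw [sum_const, card_range, nsmul_eq_mul, mul_comm (k : ℝ), ← add_sub_assoc]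
  congr 4 <;> field_simp

end PathGraph

theorem stmt10 (n : ℕ) [DecidableRel (SimpleGraph.pathGraph n).Adj]
    (α : ℝ) (hα0 : 0 ≤ α) (hα1 : α < 1 / 2)
    (k : ℕ) (hk1 : 1 ≤ k) (hkn : k ≤ n) :
    Sk (Aalpha α (SimpleGraph.pathGraph n)) k ≤
      2 * α * k + α - 1
        + α * (Real.sin (π / (2 * n)))⁻¹ * Real.sin ((2 * k + 1) * π / (2 * n))
        + (1 - 2 * α) * (Real.sin (π / (2 * (n + 1))))⁻¹
            * Real.sin ((2 * k + 1) * π / (2 * (n + 1))) := by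
  have hbound := Sk_Aalpha_le (SimpleGraph.pathGraph n) hα0 hα1.le hkn
  rw [Sk_signlessLapMatrix_pathGraph (hk1.trans hkn) hkn, Sk_adjMatrix_pathGraph hkn] at hbound
  linarith
end

section
/- Let P_n be the path on n vertices and let 0 ≤ α < 1. Then for every k with 1 ≤ k ≤ n, S_k(A_α(P_n)) < 2k. -/
open Matrix Finset Real

/-!
Writing `L` for the Laplacian, `Δ • 1 - A_α(G) = (Δ • 1 - D) + (1 - α) • L`. If all degrees are at
most `Δ`, both summands are positive semidefinite. When `G` is connected the kernel of `L` consists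
of the constant vectors, and a vertex of degree less than `Δ` excludes the nonzero ones from the
kernel of `Δ • 1 - D`. Hence the sum is positive definite, every eigenvalue of `A_α(G)` is less
than `Δ`, and any `k` of them sum to less than `Δ * k`. For a path, `Δ = 2` and an endpoint has
degree at most one.
-/

section PosDef

variable {m 𝕜 : Type*} [Fintype m] [RCLike 𝕜]

open scoped ComplexOrder

theorem posDef_add_of_mulVec_eq_zero {A B : Matrix m m 𝕜} (hA : A.PosSemidef)
    (hB : B.PosSemidef) (hker : ∀ x, A *ᵥ x = 0 → B *ᵥ x = 0 → x = 0) : (A + B).PosDef := by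
  refine .of_dotProduct_mulVec_pos (hA.add hB).isHermitian fun x hx ↦ ?_
  have hAx := hA.dotProduct_mulVec_nonneg x
  have hBx := hB.dotProduct_mulVec_nonneg x
  rw [add_mulVec, dotProduct_add]
  refine (add_nonneg hAx hBx).lt_of_ne' fun hsum ↦ hx ?_
  obtain ⟨hA0, hB0⟩ := (add_eq_zero_iff_of_nonneg hAx hBx).1 hsum
  exact hker x ((hA.dotProduct_mulVec_zero_iff x).1 hA0) ((hB.dotProduct_mulVec_zero_iff x).1 hB0)

theorem eigenvalues_lt_of_posDef_algebraMap_sub [DecidableEq m] {M : Matrix m m 𝕜}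
    (hM : M.IsHermitian) {c : ℝ} (h : (algebraMap ℝ (Matrix m m 𝕜) c - M).PosDef) (i : m) :
    hM.eigenvalues i < c := by
  have hmem : c - hM.eigenvalues i ∈ spectrum ℝ (algebraMap ℝ (Matrix m m 𝕜) c - M) := by
    rw [← spectrum.singleton_sub_eq]
    exact Set.sub_mem_sub rfl (hM.eigenvalues_mem_spectrum_real i)
  rw [h.1.spectrum_real_eq_range_eigenvalues] at hmem
  obtain ⟨j, hj⟩ := hmem
  exact sub_pos.1 (hj ▸ h.eigenvalues_pos j)

end PosDef

section Graph

variable {V : Type*} [Fintype V] [DecidableEq V] {G : SimpleGraph V} [DecidableRel G.Adj]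

theorem posDef_diagonal_add_smul_lapMatrix (hG : G.Preconnected) {w : V → ℝ} (hw : 0 < w)
    {c : ℝ} (hc : 0 < c) : (diagonal w + c • G.lapMatrix ℝ).PosDef := by
  obtain ⟨hw_nonneg, i, hi⟩ := Pi.lt_def.1 hw
  refine posDef_add_of_mulVec_eq_zero (.diagonal hw_nonneg)
    ((G.posSemidef_lapMatrix ℝ).smul hc.le) fun x hdiag hlap ↦ ?_
  have hconst : ∀ u v, x u = x v := fun u v ↦ by
    rw [smul_mulVec, smul_eq_zero_iff_right hc.ne',
      G.lapMatrix_mulVec_eq_zero_iff_forall_reachable] at hlap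
    exact hlap u v (hG u v)
  have hxi : x i = 0 := by
    have := congrFun hdiag i
    rw [mulVec_diagonal] at this
    exact (mul_eq_zero.1 this).resolve_left hi.ne'
  exact funext fun u ↦ (hconst u i).trans hxi

end Graph

section Aalpha

variable {n : ℕ}

theorem isHermitian_Aalpha (α : ℝ) (G : SimpleGraph (Fin n)) [DecidableRel G.Adj] :
    (Aalpha α G).IsHermitian :=
  ((G.isHermitian_degMatrix ℝ).smul (.all α)).add ((G.isHermitian_adjMatrix ℝ).smul (.all _))

theorem algebraMap_sub_Aalpha (α c : ℝ) (G : SimpleGraph (Fin n)) [DecidableRel G.Adj] :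
    algebraMap ℝ (Matrix (Fin n) (Fin n) ℝ) c - Aalpha α G =
      diagonal (fun i ↦ c - G.degree i) + (1 - α) • G.lapMatrix ℝ := by
  have hscalar : algebraMap ℝ (Matrix (Fin n) (Fin n) ℝ) c = diagonal fun _ ↦ c :=
    algebraMap_eq_diagonal c
  rw [hscalar, ← diagonal_sub, Aalpha, SimpleGraph.lapMatrix, SimpleGraph.degMatrix]
  module

theorem eigenvalues_Aalpha_lt {G : SimpleGraph (Fin n)} [DecidableRel G.Adj]
    (hG : G.Preconnected) {Δ : ℕ} (hle : ∀ i, G.degree i ≤ Δ) (hlt : ∃ i, G.degree i < Δ)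
    {α : ℝ} (hα : α < 1) (i : Fin n) : (isHermitian_Aalpha α G).eigenvalues i < Δ := by
  have hw : 0 < fun i ↦ (Δ : ℝ) - G.degree i :=
    Pi.lt_def.2 ⟨fun i ↦ sub_nonneg.2 (Nat.cast_le.2 (hle i)),
      hlt.imp fun _ hi ↦ sub_pos.2 (Nat.cast_lt.2 hi)⟩
  refine eigenvalues_lt_of_posDef_algebraMap_sub _ ?_ i
  rw [algebraMap_sub_Aalpha]
  exact posDef_diagonal_add_smul_lapMatrix hG hw (sub_pos.2 hα)

end Aalpha

section Sk

variable {n k : ℕ} {M : Matrix (Fin n) (Fin n) ℝ}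

theorem exists_card_eq_and_Sk_eq_sum (hM : M.IsHermitian) (hkn : k ≤ n) :
    ∃ s : Finset (Fin n), #s = k ∧ Sk M k = ∑ i ∈ s, hM.eigenvalues i := by
  rw [Sk, dif_pos hM]
  have hne : {x | ∃ s : Finset (Fin n), #s = k ∧ x = ∑ i ∈ s, hM.eigenvalues i}.Nonempty := by
    obtain ⟨s, -, hs⟩ := exists_subset_card_eq (s := (univ : Finset (Fin n))) (by simpa using hkn)
    exact ⟨_, s, hs, rfl⟩
  refine hne.csSup_mem ((Set.finite_range fun s ↦ ∑ i ∈ s, hM.eigenvalues i).subset ?_)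
  rintro _ ⟨s, -, rfl⟩
  exact ⟨s, rfl⟩

theorem Sk_lt_mul_of_eigenvalues_lt (hM : M.IsHermitian) (hk : 1 ≤ k) (hkn : k ≤ n) {c : ℝ}
    (h : ∀ i, hM.eigenvalues i < c) : Sk M k < c * k := by
  obtain ⟨s, rfl, hs⟩ := exists_card_eq_and_Sk_eq_sum hM hkn
  calc Sk M #s = ∑ i ∈ s, hM.eigenvalues i := hs
    _ < ∑ _i ∈ s, c := sum_lt_sum_of_nonempty (card_pos.1 hk) fun i _ ↦ h i
    _ = c * #s := by rw [sum_const, nsmul_eq_mul, mul_comm]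

end Sk

section Path

variable {n : ℕ} (i : Fin n) [Fintype ((SimpleGraph.pathGraph n).neighborSet i)]

theorem degree_pathGraph_le_two : (SimpleGraph.pathGraph n).degree i ≤ 2 := by
  by_contra! h
  obtain ⟨a, b, c, ha, hb, hc, hab, hac, hbc⟩ := two_lt_card_iff.1 h
  simp only [SimpleGraph.mem_neighborFinset, SimpleGraph.pathGraph_adj, ne_eq, Fin.ext_iff]
    at ha hb hc hab hac hbc
  omega

variable {i} in
theorem degree_pathGraph_le_one_of_val_eq_zero (hi : i.val = 0) :
    (SimpleGraph.pathGraph n).degree i ≤ 1 := by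
  refine card_le_one.2 fun a ha b hb ↦ ?_
  simp only [SimpleGraph.mem_neighborFinset, SimpleGraph.pathGraph_adj] at ha hb
  omega

end Path

theorem stmt12_general {n : ℕ} {G : SimpleGraph (Fin n)} [DecidableRel G.Adj]
    (hG : G.Preconnected) {Δ : ℕ} (hle : ∀ i, G.degree i ≤ Δ) (hlt : ∃ i, G.degree i < Δ)
    {α : ℝ} (hα : α < 1) {k : ℕ} (hk : 1 ≤ k) (hkn : k ≤ n) :
    Sk (Aalpha α G) k < Δ * k :=
  Sk_lt_mul_of_eigenvalues_lt (isHermitian_Aalpha α G) hk hkn (eigenvalues_Aalpha_lt hG hle hlt hα)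

theorem stmt12 (n : ℕ) [DecidableRel (SimpleGraph.pathGraph n).Adj]
    (α : ℝ) (hα0 : 0 ≤ α) (hα1 : α < 1)
    (k : ℕ) (hk1 : 1 ≤ k) (hkn : k ≤ n) :
    Sk (Aalpha α (SimpleGraph.pathGraph n)) k < 2 * k :=
  mod_cast stmt12_general (SimpleGraph.pathGraph_preconnected n) (fun i ↦ degree_pathGraph_le_two i)
    ⟨⟨0, hk1.trans hkn⟩, Nat.lt_succ_of_le (degree_pathGraph_le_one_of_val_eq_zero rfl)⟩ hα1 hk1 hkn
end

section
/- Let G be a graph on n vertices with maximum degree Δ and let 0 ≤ α ≤ 1/2. Then for every k with 1 ≤ k ≤ n, S_k(A_α(G)) ≥ (1−α)·S_k(Q(G)) + (2α−1)·k·Δ, where Q(G) = D(G) + A(G) is the signless Laplacian matrix of G. -/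
open Matrix Finset Real

/-- The signless Laplacian matrix `Q(G) = D(G) + A(G)`. -/
noncomputable def Qmat {n : ℕ} (G : SimpleGraph (Fin n)) [DecidableRel G.Adj] :
    Matrix (Fin n) (Fin n) ℝ :=
  Matrix.diagonal (fun i => (G.degree i : ℝ)) + G.adjMatrix ℝ

/-!
With `D` the degree matrix, `(1 - α) • Q = A_α + (1 - 2α) • D`. By Ky Fan's maximum principle,
`S_k(M)` is the largest value of `∑ i, ⟪v i, M v i⟫` over orthonormal families of `k` vectors, so
`S_k` is subadditive. Hence `(1 - α) S_k(Q) ≤ S_k(A_α) + S_k((1 - 2α) • D)`, and for `α ≤ 1/2`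
every eigenvalue of `(1 - 2α) • D` is at most `(1 - 2α) Δ`.
-/

open scoped InnerProductSpace

lemma exists_subset_card_eq_forall_le {ι R : Type*} [LinearOrder R] (f : ι → R) {s : Finset ι}
    {k : ℕ} (hk : k ≤ #s) :
    ∃ t ⊆ s, #t = k ∧ ∀ i ∈ t, ∀ j ∈ s, j ∉ t → f j ≤ f i := by
  classical
  induction k with
  | zero => exact ⟨∅, empty_subset s, card_empty, by simp⟩
  | succ k ih =>
    obtain ⟨t, hts, rfl, htop⟩ := ih (by lia)
    obtain ⟨a, ha, hmax⟩ := exists_max_image (s \ t) f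
      (sdiff_nonempty.2 fun hst => by have := card_le_card hst; lia)
    obtain ⟨has, hat⟩ := mem_sdiff.1 ha
    refine ⟨insert a t, insert_subset has hts, card_insert_of_notMem hat, fun i hi j hj hjt => ?_⟩
    rw [mem_insert, not_or] at hjt
    rcases mem_insert.1 hi with rfl | hi
    · exact hmax j (mem_sdiff.2 ⟨hj, hjt.2⟩)
    · exact htop i hi j hj hjt.2

lemma exists_subset_card_eq_threshold {ι R : Type*} [LinearOrder R] [Nonempty R] (f : ι → R)
    {s : Finset ι} {k : ℕ} (hk : k ≤ #s) :
    ∃ t ⊆ s, #t = k ∧ ∃ c, (∀ i ∈ t, c ≤ f i) ∧ ∀ j ∈ s, j ∉ t → f j ≤ c := by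
  obtain ⟨t, hts, htk, htop⟩ := exists_subset_card_eq_forall_le f hk
  refine ⟨t, hts, htk, ?_⟩
  obtain rfl | htne := t.eq_empty_or_nonempty
  · obtain ⟨c, hc⟩ := (s.finite_toSet.image f).bddAbove
    exact ⟨c, by simp, fun j hj _ => hc ⟨j, hj, rfl⟩⟩
  · obtain ⟨i, hi, hmin⟩ := exists_min_image t f htne
    exact ⟨f i, hmin, htop i hi⟩

lemma exists_subset_card_eq_sum_mul_le_sum {ι R : Type*} [CommRing R] [LinearOrder R]
    [IsStrictOrderedRing R] {s : Finset ι} {k : ℕ} (f w : ι → R) (hw0 : ∀ i ∈ s, 0 ≤ w i)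
    (hw1 : ∀ i ∈ s, w i ≤ 1) (hwk : ∑ i ∈ s, w i = k) :
    ∃ t ⊆ s, #t = k ∧ ∑ i ∈ s, f i * w i ≤ ∑ i ∈ t, f i := by
  classical
  have hks : k ≤ #s := by
    have h : (k : R) ≤ #s := hwk ▸ (sum_le_sum hw1).trans_eq (by simp)
    exact_mod_cast h
  obtain ⟨t, hts, htk, c, hct, hcs⟩ := exists_subset_card_eq_threshold f hks
  refine ⟨t, hts, htk, ?_⟩
  have sum_t (g : ι → R) : ∑ i ∈ s, g i * (if i ∈ t then 1 else 0) = ∑ i ∈ t, g i := by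
    simp [inter_eq_right.2 hts]
  have hpoint : ∀ i ∈ s, (f i - c) * w i ≤ (f i - c) * (if i ∈ t then 1 else 0) := by
    intro i hi
    split_ifs with hit
    · exact mul_le_mul_of_nonneg_left (hw1 i hi) (sub_nonneg.2 (hct i hit))
    · rw [mul_zero]
      exact mul_nonpos_of_nonpos_of_nonneg (sub_nonpos.2 (hcs i hi hit)) (hw0 i hi)
  -- Both sides carry the same total weight `k`, so subtracting `c` from `f` shifts them equally.
  have hshift := sum_le_sum hpoint
  rw [sum_t] at hshift
  simp only [sub_mul, sum_sub_distrib, ← mul_sum, hwk, sum_const, htk, nsmul_eq_mul] at hshift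
  linarith

section KyFan

variable {𝕜 E ι κ : Type*} [RCLike 𝕜] [NormedAddCommGroup E] [InnerProductSpace 𝕜 E]
  [Fintype ι] (b : OrthonormalBasis ι 𝕜 E) {T : E →ₗ[𝕜] E} {μ : ι → ℝ}

lemma re_inner_apply_self_eq_sum_mul_sq (hT : ∀ j, T (b j) = (μ j : 𝕜) • b j) (x : E) :
    RCLike.re ⟪x, T x⟫_𝕜 = ∑ j, μ j * ‖⟪b j, x⟫_𝕜‖ ^ 2 := by
  have hTx : T x = ∑ j, (⟪b j, x⟫_𝕜 * μ j) • b j := by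
    conv_lhs => rw [← b.sum_repr' x]
    simp only [map_sum, map_smul, hT, smul_smul]
  rw [hTx, inner_sum, map_sum]
  refine sum_congr rfl fun j _ => ?_
  rw [inner_smul_right, mul_right_comm, ← inner_conj_symm x (b j), RCLike.mul_conj, mul_comm]
  norm_cast

lemma exists_card_eq_sum_re_inner_le_sum [Fintype κ] (hT : ∀ j, T (b j) = (μ j : 𝕜) • b j)
    {v : κ → E} (hv : Orthonormal 𝕜 v) :
    ∃ t : Finset ι, #t = Fintype.card κ ∧ ∑ i, RCLike.re ⟪v i, T (v i)⟫_𝕜 ≤ ∑ j ∈ t, μ j := by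
  have hw1 (j : ι) : ∑ i, ‖⟪b j, v i⟫_𝕜‖ ^ 2 ≤ 1 := by
    simpa [norm_inner_symm] using hv.sum_inner_products_le (b j) (s := univ)
  have hwk : ∑ j, ∑ i, ‖⟪b j, v i⟫_𝕜‖ ^ 2 = Fintype.card κ := by
    rw [sum_comm]
    simp [b.sum_sq_norm_inner_right, hv.norm_eq_one]
  obtain ⟨t, -, htk, hle⟩ := exists_subset_card_eq_sum_mul_le_sum μ
    (fun j => ∑ i, ‖⟪b j, v i⟫_𝕜‖ ^ 2) (fun j _ => by positivity) (fun j _ => hw1 j) hwk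
  refine ⟨t, htk, le_of_eq_of_le ?_ hle⟩
  simp only [re_inner_apply_self_eq_sum_mul_sq b hT, mul_sum]
  exact sum_comm

end KyFan

section Sk

variable {n k : ℕ} {M N : Matrix (Fin n) (Fin n) ℝ}

lemma isGreatest_sum_eigenvalues_Sk (hM : M.IsHermitian) (hk : k ≤ n) :
    IsGreatest {x | ∃ s : Finset (Fin n), #s = k ∧ x = ∑ i ∈ s, hM.eigenvalues i} (Sk M k) := by
  set S := {x | ∃ s : Finset (Fin n), #s = k ∧ x = ∑ i ∈ s, hM.eigenvalues i}
  have hfin : S.Finite := (Set.finite_range fun s => ∑ i ∈ s, hM.eigenvalues i).subset <| by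
    rintro _ ⟨s, -, rfl⟩
    exact ⟨s, rfl⟩
  have hne : S.Nonempty := by
    obtain ⟨s, -, hs⟩ := exists_subset_card_eq (s := (univ : Finset (Fin n))) (by simpa using hk)
    exact ⟨_, s, hs, rfl⟩
  rw [Sk, dif_pos hM]
  exact ⟨hne.csSup_mem hfin, fun _ => le_csSup hfin.bddAbove⟩

lemma toEuclideanLin_eigenvectorBasis (hM : M.IsHermitian) (j : Fin n) :
    M.toEuclideanLin (hM.eigenvectorBasis j) = hM.eigenvalues j • hM.eigenvectorBasis j := by
  rw [toLpLin_apply, hM.mulVec_eigenvectorBasis, WithLp.toLp_smul, WithLp.toLp_ofLp]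

theorem isGreatest_sum_inner_Sk (hM : M.IsHermitian) (hk : k ≤ n) :
    IsGreatest {x | ∃ v : Fin k → EuclideanSpace ℝ (Fin n), Orthonormal ℝ v ∧
      x = ∑ i, ⟪v i, M.toEuclideanLin (v i)⟫_ℝ} (Sk M k) := by
  obtain ⟨⟨s, hs, hSk⟩, hub⟩ := isGreatest_sum_eigenvalues_Sk hM hk
  constructor
  · refine ⟨hM.eigenvectorBasis ∘ s.orderEmbOfFin hs,
      hM.eigenvectorBasis.orthonormal.comp _ (s.orderEmbOfFin hs).injective, ?_⟩
    have hreindex : ∑ j ∈ s, hM.eigenvalues j = ∑ i, hM.eigenvalues (s.orderEmbOfFin hs i) := by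
      conv_lhs => rw [← map_orderEmbOfFin_univ s hs, sum_map]
      rfl
    simp [hSk, hreindex, toEuclideanLin_eigenvectorBasis, inner_smul_right]
  · rintro _ ⟨v, hv, rfl⟩
    obtain ⟨t, htk, hle⟩ := exists_card_eq_sum_re_inner_le_sum hM.eigenvectorBasis
      (toEuclideanLin_eigenvectorBasis hM) hv
    exact hle.trans (hub ⟨t, by simpa using htk, rfl⟩)

theorem Sk_add_le_s13 (hM : M.IsHermitian) (hN : N.IsHermitian) (hk : k ≤ n) :
    Sk (M + N) k ≤ Sk M k + Sk N k := by
  obtain ⟨v, hv, hSk⟩ := (isGreatest_sum_inner_Sk (hM.add hN) hk).1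
  calc Sk (M + N) k
      = ∑ i, ⟪v i, M.toEuclideanLin (v i)⟫_ℝ + ∑ i, ⟪v i, N.toEuclideanLin (v i)⟫_ℝ := by
        simp only [hSk, map_add, LinearMap.add_apply, inner_add_right, sum_add_distrib]
    _ ≤ Sk M k + Sk N k := add_le_add ((isGreatest_sum_inner_Sk hM hk).2 ⟨v, hv, rfl⟩)
        ((isGreatest_sum_inner_Sk hN hk).2 ⟨v, hv, rfl⟩)

lemma mul_Sk_le_Sk_smul (hM : M.IsHermitian) (hk : k ≤ n) (c : ℝ) :
    c * Sk M k ≤ Sk (c • M) k := by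
  obtain ⟨v, hv, hSk⟩ := (isGreatest_sum_inner_Sk hM hk).1
  refine (isGreatest_sum_inner_Sk (hM.smul (IsSelfAdjoint.all c)) hk).2 ⟨v, hv, ?_⟩
  simp only [hSk, mul_sum, map_smul, LinearMap.smul_apply, inner_smul_right]

lemma Sk_diagonal_le {d : Fin n → ℝ} {c : ℝ} (hd : ∀ i, d i ≤ c) (hk : k ≤ n) :
    Sk (diagonal d) k ≤ k * c := by
  have hD : (diagonal d).IsHermitian := isHermitian_diagonal d
  obtain ⟨s, rfl, hSk⟩ := (isGreatest_sum_eigenvalues_Sk hD hk).1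
  have heig (i : Fin n) : hD.eigenvalues i ≤ c := by
    obtain ⟨j, hj⟩ := spectrum_diagonal d ▸ hD.eigenvalues_mem_spectrum_real i
    exact hj ▸ hd j
  rw [hSk, ← nsmul_eq_mul]
  exact sum_le_card_nsmul s _ c fun i _ => heig i

end Sk

section Graph

variable {n : ℕ} (G : SimpleGraph (Fin n)) [DecidableRel G.Adj]

lemma isHermitian_Qmat : (Qmat G).IsHermitian :=
  (isHermitian_diagonal _).add (G.isHermitian_adjMatrix ℝ)

lemma isHermitian_Aalpha_s13 (α : ℝ) : (Aalpha α G).IsHermitian :=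
  ((isHermitian_diagonal _).smul (IsSelfAdjoint.all α)).add
    ((G.isHermitian_adjMatrix ℝ).smul (IsSelfAdjoint.all (1 - α)))

lemma smul_Qmat_eq_Aalpha_add_diagonal (α : ℝ) :
    (1 - α) • Qmat G = Aalpha α G + diagonal (fun i => (1 - 2 * α) * (G.degree i : ℝ)) := by
  have hdiag : diagonal (fun i => (1 - 2 * α) * (G.degree i : ℝ)) =
      (1 - 2 * α) • diagonal (fun i => (G.degree i : ℝ)) :=
    diagonal_smul (1 - 2 * α) fun i => (G.degree i : ℝ)
  rw [hdiag, Qmat, Aalpha]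
  module

theorem stmt13_general {α : ℝ} (hα : α ≤ 1 / 2) {k : ℕ} (hk : k ≤ n) :
    Sk (Aalpha α G) k ≥ (1 - α) * Sk (Qmat G) k + (2 * α - 1) * k * G.maxDegree := by
  have hdeg (i : Fin n) : (1 - 2 * α) * (G.degree i : ℝ) ≤ (1 - 2 * α) * G.maxDegree :=
    mul_le_mul_of_nonneg_left (mod_cast G.degree_le_maxDegree i) (by linarith)
  have hle : (1 - α) * Sk (Qmat G) k ≤ Sk (Aalpha α G) k + k * ((1 - 2 * α) * G.maxDegree) :=
    calc (1 - α) * Sk (Qmat G) k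
        ≤ Sk ((1 - α) • Qmat G) k := mul_Sk_le_Sk_smul (isHermitian_Qmat G) hk _
      _ = Sk (Aalpha α G + diagonal (fun i => (1 - 2 * α) * (G.degree i : ℝ))) k := by
        rw [smul_Qmat_eq_Aalpha_add_diagonal]
      _ ≤ Sk (Aalpha α G) k + Sk (diagonal (fun i => (1 - 2 * α) * (G.degree i : ℝ))) k :=
        Sk_add_le_s13 (isHermitian_Aalpha_s13 G α) (isHermitian_diagonal _) hk
      _ ≤ Sk (Aalpha α G) k + k * ((1 - 2 * α) * G.maxDegree) := by
        gcongr
        exact Sk_diagonal_le hdeg hk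
  linarith

end Graph

theorem stmt13 {n : ℕ} (G : SimpleGraph (Fin n)) [DecidableRel G.Adj]
    (α : ℝ) (hα0 : 0 ≤ α) (hα1 : α ≤ 1 / 2)
    (k : ℕ) (hk1 : 1 ≤ k) (hkn : k ≤ n) :
    Sk (Aalpha α G) k ≥ (1 - α) * Sk (Qmat G) k + (2 * α - 1) * k * G.maxDegree :=
  stmt13_general G hα1 hkn
end

section
/- Let 0 ≤ α < 1 and let G be a connected graph on n vertices with m edges. For every integer k with 1 ≤ k ≤ n and every vertex subset U ⊆ V(G) with |U| = k − 1, S_k(A_α(G)) ≥ ( α − 1/(n−k+1) )·Σ_{u∈U} d_u + ( 2m − (1−α)·|∂(U, V(G)∖U)| ) / (n−k+1), where d_u denotes the degree of the vertex u and ∂(U, V(G)∖U) is the set of edges of G joining a vertex of U with a vertex of V(G)∖U. -/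
open Matrix Finset Real

/-!
Ky Fan's maximum principle: an orthonormal family of `k` vectors `v j` satisfies
`∑ j, ⟪v j, M v j⟫ ≤ S_k(M)`, because in an eigenbasis the left side is a sum of eigenvalues with
weights in `[0, 1]` (Bessel) of total `k` (Parseval). Normalised indicator vectors of disjoint
vertex sets are orthonormal; apply the principle to the singletons of `U` together with `Uᶜ`. The
singletons contribute `α d_u` each, and `Uᶜ` contributes the sum of all entries of the principal
submatrix of `A_α` on `Uᶜ`, which is `∑ x ∈ Uᶜ, d_x - (1 - α) |∂(U, Uᶜ)|`, divided by `|Uᶜ|`.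
-/

lemma exists_finset_card_eq_forall_notMem_le {ι R : Type*} [Fintype ι] [LinearOrder R] (f : ι → R)
    {k : ℕ} (hk : k ≤ Fintype.card ι) :
    ∃ s : Finset ι, #s = k ∧ ∀ i ∈ s, ∀ j ∉ s, f j ≤ f i := by
  classical
  induction k with
  | zero => exact ⟨∅, by simp⟩
  | succ k ih =>
    obtain ⟨s, hs, hdom⟩ := ih (by omega)
    have hne : sᶜ.Nonempty := by
      rw [← card_pos, card_compl]
      omega
    obtain ⟨a, ha, hmax⟩ := exists_max_image sᶜ f hne
    rw [mem_compl] at ha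
    refine ⟨insert a s, by rw [card_insert_of_notMem ha, hs], fun i hi j hj => ?_⟩
    rw [mem_insert, not_or] at hj
    obtain rfl | hi := mem_insert.mp hi
    · exact hmax j (mem_compl.mpr hj.2)
    · exact hdom i hi j hj.2

lemma exists_forall_mem_le_forall_notMem_le {ι R : Type*} [Finite ι] [LinearOrder R] [Nonempty R]
    {f : ι → R} {s : Finset ι} (hdom : ∀ i ∈ s, ∀ j ∉ s, f j ≤ f i) :
    ∃ t, (∀ i ∈ s, t ≤ f i) ∧ ∀ j ∉ s, f j ≤ t := by
  obtain rfl | hs := s.eq_empty_or_nonempty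
  · obtain ⟨t, ht⟩ := (Set.finite_range f).bddAbove
    exact ⟨t, by simp, fun j _ => ht ⟨j, rfl⟩⟩
  · obtain ⟨a, ha, hmin⟩ := exists_min_image s f hs
    exact ⟨f a, hmin, hdom a ha⟩

lemma exists_finset_card_eq_sum_mul_le {ι R : Type*} [Fintype ι] [CommRing R] [LinearOrder R]
    [IsStrictOrderedRing R] (f w : ι → R) {k : ℕ} (hw₀ : ∀ i, 0 ≤ w i) (hw₁ : ∀ i, w i ≤ 1)
    (hw : ∑ i, w i = k) :
    ∃ s : Finset ι, #s = k ∧ ∑ i, f i * w i ≤ ∑ i ∈ s, f i := by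
  classical
  have hk : k ≤ Fintype.card ι := by
    have h : ∑ i, w i ≤ ∑ _i : ι, 1 := sum_le_sum fun i _ => hw₁ i
    simpa [hw] using h
  obtain ⟨s, hs, hdom⟩ := exists_finset_card_eq_forall_notMem_le f hk
  obtain ⟨t, ht_le, hle_t⟩ := exists_forall_mem_le_forall_notMem_le hdom
  have hpt (i : ι) : (f i - t) * w i ≤ if i ∈ s then f i - t else 0 := by
    split_ifs with hi
    · exact mul_le_of_le_one_right (sub_nonneg.mpr (ht_le i hi)) (hw₁ i)
    · exact mul_nonpos_of_nonpos_of_nonneg (sub_nonpos.mpr (hle_t i hi)) (hw₀ i)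
  refine ⟨s, hs, ?_⟩
  calc ∑ i, f i * w i = ∑ i, (f i - t) * w i + t * k := by
        simp only [sub_mul, sum_sub_distrib, ← mul_sum, hw, sub_add_cancel]
    _ ≤ ∑ i, (if i ∈ s then f i - t else 0) + t * k := by gcongr with i; exact hpt i
    _ = ∑ i ∈ s, f i := by
        rw [sum_ite_mem, univ_inter, sum_sub_distrib, sum_const, hs, nsmul_eq_mul]
        ring

section KyFan

variable {𝕜 E ι κ : Type*} [RCLike 𝕜] [NormedAddCommGroup E] [InnerProductSpace 𝕜 E]
  [Fintype ι] [Fintype κ]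

lemma inner_map_self_eq_sum_mul_norm_sq (b : OrthonormalBasis ι 𝕜 E) {T : E →ₗ[𝕜] E} {μ : ι → 𝕜}
    (hT : ∀ i, T (b i) = μ i • b i) (x : E) :
    inner 𝕜 x (T x) = ∑ i, μ i * (‖inner 𝕜 (b i) x‖ : 𝕜) ^ 2 := by
  have hTx : T x = ∑ i, inner 𝕜 (b i) x • μ i • b i := by
    conv_lhs => rw [← b.sum_repr' x]
    simp only [map_sum, map_smul, hT]
  rw [hTx, inner_sum]
  refine sum_congr rfl fun i _ => ?_
  rw [inner_smul_right, inner_smul_right, mul_left_comm, ← inner_conj_symm x, RCLike.mul_conj]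

lemma exists_finset_card_eq_sum_re_inner_map_le (b : OrthonormalBasis ι 𝕜 E) {T : E →ₗ[𝕜] E}
    {μ : ι → ℝ} (hT : ∀ i, T (b i) = (μ i : 𝕜) • b i) {v : κ → E} (hv : Orthonormal 𝕜 v) :
    ∃ s : Finset ι, #s = Fintype.card κ ∧
      ∑ j, RCLike.re (inner 𝕜 (v j) (T (v j))) ≤ ∑ i ∈ s, μ i := by
  have hbessel (i : ι) : ∑ j, ‖inner 𝕜 (b i) (v j)‖ ^ 2 ≤ 1 := by
    simpa [norm_inner_symm] using hv.sum_inner_products_le (b i) (s := univ)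
  have hparseval : ∑ i, ∑ j, ‖inner 𝕜 (b i) (v j)‖ ^ 2 = Fintype.card κ := by
    rw [sum_comm]
    simp [b.sum_sq_norm_inner_right, hv.norm_eq_one]
  obtain ⟨s, hs, hle⟩ := exists_finset_card_eq_sum_mul_le μ _ (fun i => by positivity) hbessel
    hparseval
  refine ⟨s, hs, le_of_eq_of_le ?_ hle⟩
  simp only [inner_map_self_eq_sum_mul_norm_sq b hT, map_sum, mul_sum]
  rw [sum_comm]
  norm_cast

end KyFan

section NormalizedIndicator

variable {V : Type*} [Fintype V] [DecidableEq V]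

/-- The unit vector along the indicator vector of a finite set `S` (the zero vector if `S = ∅`),
used as a test vector for Ky Fan's maximum principle. -/
noncomputable def normalizedIndicator (S : Finset V) : EuclideanSpace ℝ V :=
  (√(#S : ℝ))⁻¹ • WithLp.toLp 2 fun x => if x ∈ S then 1 else 0

lemma inner_normalizedIndicator_toEuclideanLin (M : Matrix V V ℝ) (S T : Finset V) :
    inner ℝ (normalizedIndicator S) (M.toEuclideanLin (normalizedIndicator T))
      = (∑ x ∈ S, ∑ y ∈ T, M x y) / (√(#S : ℝ) * √(#T : ℝ)) := by
  simp only [normalizedIndicator, map_smul, real_inner_smul_left, real_inner_smul_right,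
    toLpLin_toLp, EuclideanSpace.inner_toLp_toLp, star_trivial, dotProduct, toLin'_apply, mulVec,
    mul_ite, mul_one, mul_zero, sum_ite_mem, univ_inter]
  rw [div_eq_inv_mul, mul_inv, mul_assoc, mul_left_comm]

lemma inner_normalizedIndicator (S T : Finset V) :
    inner ℝ (normalizedIndicator S) (normalizedIndicator T)
      = #(S ∩ T) / (√(#S : ℝ) * √(#T : ℝ)) := by
  simpa [one_apply, sum_ite_mem, sum_ite_eq] using inner_normalizedIndicator_toEuclideanLin 1 S T

lemma orthonormal_normalizedIndicator {κ : Type*} {P : κ → Finset V} (hne : ∀ j, (P j).Nonempty)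
    (hdisj : Pairwise (Function.onFun Disjoint P)) :
    Orthonormal ℝ fun j => normalizedIndicator (P j) := by
  classical
  rw [orthonormal_iff_ite]
  intro i j
  rw [inner_normalizedIndicator]
  split_ifs with hij
  · subst hij
    have hcard : (#(P i) : ℝ) ≠ 0 := Nat.cast_ne_zero.mpr (hne i).card_pos.ne'
    rw [inter_self, Real.mul_self_sqrt (Nat.cast_nonneg _), div_self hcard]
  · rw [disjoint_iff_inter_eq_empty.mp (hdisj hij), card_empty, Nat.cast_zero, zero_div]

end NormalizedIndicator

section Sk

variable {n : ℕ} {M : Matrix (Fin n) (Fin n) ℝ}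

lemma sum_eigenvalues_le_Sk (hM : M.IsHermitian) (s : Finset (Fin n)) :
    ∑ i ∈ s, hM.eigenvalues i ≤ Sk M #s := by
  rw [Sk, dif_pos hM]
  refine le_csSup (Set.Finite.bddAbove ?_) ⟨s, rfl, rfl⟩
  refine (Set.finite_range fun t : Finset (Fin n) => ∑ i ∈ t, hM.eigenvalues i).subset ?_
  rintro _ ⟨t, -, rfl⟩
  exact ⟨t, rfl⟩

lemma sum_inner_map_le_Sk (hM : M.IsHermitian) {κ : Type*} [Fintype κ]
    {v : κ → EuclideanSpace ℝ (Fin n)} (hv : Orthonormal ℝ v) :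
    ∑ j, inner ℝ (v j) (M.toEuclideanLin (v j)) ≤ Sk M (Fintype.card κ) := by
  have hT (i : Fin n) : M.toEuclideanLin (hM.eigenvectorBasis i)
      = hM.eigenvalues i • hM.eigenvectorBasis i := by
    ext x
    exact congrFun (hM.mulVec_eigenvectorBasis i) x
  obtain ⟨s, hs, hle⟩ :=
    exists_finset_card_eq_sum_re_inner_map_le hM.eigenvectorBasis hT hv
  rw [← hs]
  exact hle.trans (sum_eigenvalues_le_Sk hM s)

lemma sum_sum_sum_div_card_le_Sk (hM : M.IsHermitian) {κ : Type*} [Fintype κ]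
    {P : κ → Finset (Fin n)} (hne : ∀ j, (P j).Nonempty)
    (hdisj : Pairwise (Function.onFun Disjoint P)) :
    ∑ j, (∑ x ∈ P j, ∑ y ∈ P j, M x y) / #(P j) ≤ Sk M (Fintype.card κ) := by
  simpa only [inner_normalizedIndicator_toEuclideanLin, Real.mul_self_sqrt (Nat.cast_nonneg _)]
    using sum_inner_map_le_Sk hM (orthonormal_normalizedIndicator hne hdisj)

lemma sum_diag_add_sum_compl_div_card_le_Sk (hM : M.IsHermitian) {U : Finset (Fin n)}
    (hU : Uᶜ.Nonempty) :
    ∑ x ∈ U, M x x + (∑ x ∈ Uᶜ, ∑ y ∈ Uᶜ, M x y) / #Uᶜ ≤ Sk M (#U + 1) := by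
  let P : Option U → Finset (Fin n) := fun j => j.elim Uᶜ fun u => {u.1}
  have hne (j : Option U) : (P j).Nonempty := by
    cases j with
    | none => exact hU
    | some u => exact singleton_nonempty u.1
  have hdisj : Pairwise (Function.onFun Disjoint P) := by
    rintro (_ | u) (_ | v) huv
    · exact absurd rfl huv
    · exact disjoint_singleton_right.mpr (notMem_compl.mpr v.2)
    · exact disjoint_singleton_left.mpr (notMem_compl.mpr u.2)
    · exact disjoint_singleton.mpr fun h => huv (congrArg some (Subtype.ext h))
  have h := sum_sum_sum_div_card_le_Sk hM hne hdisj
  simpa [P, sum_attach U fun x => M x x, add_comm] using h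

end Sk

section Interedges

variable {V : Type*} (G : SimpleGraph V) [DecidableRel G.Adj]

lemma card_interedges_eq_sum_adjMatrix (R : Type*) [AddCommMonoidWithOne R] (S T : Finset V) :
    (#(G.interedges S T) : R) = ∑ x ∈ S, ∑ y ∈ T, G.adjMatrix R x y := by
  simp only [SimpleGraph.interedges_def, card_filter, sum_product, Nat.cast_sum, Nat.cast_ite,
    Nat.cast_one, Nat.cast_zero, SimpleGraph.adjMatrix_apply]

lemma sum_degree_eq_card_interedges_add_compl [Fintype V] [DecidableEq V] (S : Finset V) :
    ∑ x ∈ S, G.degree x = #(G.interedges S S) + #(G.interedges S Sᶜ) := by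
  have hdeg (x : V) : G.degree x = ∑ y ∈ S, G.adjMatrix ℕ x y + ∑ y ∈ Sᶜ, G.adjMatrix ℕ x y := by
    rw [sum_add_sum_compl]
    exact G.degree_eq_sum_if_adj x
  simp only [hdeg, sum_add_distrib, ← card_interedges_eq_sum_adjMatrix, Nat.cast_id]

end Interedges

section Aalpha

variable {n : ℕ} (α : ℝ) (G : SimpleGraph (Fin n)) [DecidableRel G.Adj]

lemma Aalpha_isHermitian : (Aalpha α G).IsHermitian := by
  rw [IsHermitian, conjTranspose_eq_transpose_of_trivial, Aalpha]
  simp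

lemma Aalpha_apply_self (x : Fin n) : Aalpha α G x x = α * G.degree x := by
  simp [Aalpha]

lemma sum_sum_Aalpha (S : Finset (Fin n)) :
    ∑ x ∈ S, ∑ y ∈ S, Aalpha α G x y
      = ∑ x ∈ S, (G.degree x : ℝ) - (1 - α) * #(G.interedges S Sᶜ) := by
  have hdiag : ∑ x ∈ S, ∑ y ∈ S, diagonal (fun i => (G.degree i : ℝ)) x y
      = ∑ x ∈ S, (G.degree x : ℝ) := by
    refine sum_congr rfl fun x hx => ?_
    simp only [diagonal_apply, sum_ite_eq, if_pos hx]
  have hdeg : ∑ x ∈ S, (G.degree x : ℝ) = #(G.interedges S S) + #(G.interedges S Sᶜ) := by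
    exact_mod_cast sum_degree_eq_card_interedges_add_compl G S
  simp only [Aalpha, Matrix.add_apply, Matrix.smul_apply, smul_eq_mul, sum_add_distrib,
    ← mul_sum, hdiag, ← card_interedges_eq_sum_adjMatrix]
  rw [hdeg]
  ring

end Aalpha

theorem stmt16_general {n : ℕ} (G : SimpleGraph (Fin n)) [DecidableRel G.Adj]
    (α : ℝ) (m : ℕ) (hm : G.edgeFinset.card = m)
    (k : ℕ) (hk1 : 1 ≤ k) (hkn : k ≤ n)
    (U : Finset (Fin n)) (hU : U.card = k - 1) :
    Sk (Aalpha α G) k ≥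
      (α - 1 / ((n : ℝ) - k + 1)) * (∑ u ∈ U, (G.degree u : ℝ))
        + (2 * m - (1 - α) *
            (((U ×ˢ Uᶜ).filter (fun p => G.Adj p.1 p.2)).card : ℝ)) / ((n : ℝ) - k + 1) := by
  have hUc : (#Uᶜ : ℝ) = (n : ℝ) - k + 1 := by
    rw [card_compl, hU, Fintype.card_fin, Nat.cast_sub (by omega), Nat.cast_sub hk1]
    push_cast
    ring
  have hne : Uᶜ.Nonempty := by
    rw [← card_pos, card_compl, hU, Fintype.card_fin]
    omega
  have hdeg : ∑ x ∈ U, (G.degree x : ℝ) + ∑ x ∈ Uᶜ, (G.degree x : ℝ) = 2 * m := by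
    rw [sum_add_sum_compl, ← hm]
    exact_mod_cast G.sum_degrees_eq_twice_card_edges
  have := G.symm
  have hcut : #(G.interedges Uᶜ U) = #{p ∈ U ×ˢ Uᶜ | G.Adj p.1 p.2} :=
    Rel.card_interedges_comm Uᶜ U
  have h := sum_diag_add_sum_compl_div_card_le_Sk (Aalpha_isHermitian α G) hne
  rw [sum_sum_Aalpha, compl_compl, hcut, hUc, hU, Nat.sub_add_cancel hk1] at h
  simp only [Aalpha_apply_self, ← mul_sum] at h
  refine ge_iff_le.mpr (le_of_eq_of_le ?_ h)
  rw [← hdeg]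
  ring

theorem stmt16 {n : ℕ} (G : SimpleGraph (Fin n)) [DecidableRel G.Adj] (hG : G.Connected)
    (α : ℝ) (hα0 : 0 ≤ α) (hα1 : α < 1)
    (m : ℕ) (hm : G.edgeFinset.card = m)
    (k : ℕ) (hk1 : 1 ≤ k) (hkn : k ≤ n)
    (U : Finset (Fin n)) (hU : U.card = k - 1) :
    Sk (Aalpha α G) k ≥
      (α - 1 / ((n : ℝ) - k + 1)) * (∑ u ∈ U, (G.degree u : ℝ))
        + (2 * m - (1 - α) *
            (((U ×ˢ Uᶜ).filter (fun p => G.Adj p.1 p.2)).card : ℝ)) / ((n : ℝ) - k + 1) := by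
  exact stmt16_general G α m hm k hk1 hkn U hU
end
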